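/- For every subset S ⊆ {1,…,N} of size at least 2 and every v ∈ S: Δ₁(S,v) = 0 if and only if Δ₂(S,v) ≤ 0. Equivalently, removing v from S leaves rank(M_S U) unchanged if and only if ξ₂(S∖{v}) ≥ ξ₂(S). -/

import Mathlib

open Matrix

noncomputable section

open scoped Classical in
/-- The Moore–Penrose pseudoinverse of a real matrix, characterised by the four
Penrose conditions:  `A A† A = A`, `A† A A† = A†`, `(A A†)ᵀ = A A†`, `(A† A)ᵀ = A† A`. -/
noncomputable def pinv {m n : Type*} [Fintype m] [Fintype n] [DecidableEq m] [DecidableEq n]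
    (A : Matrix m n ℝ) : Matrix n m ℝ :=
  if h : ∃ B : Matrix n m ℝ,
      A * B * A = A ∧ B * A * B = B ∧ (A * B)ᵀ = A * B ∧ (B * A)ᵀ = B * A
  then h.choose else 0

/-- The sampling matrix `M_S` of a subset `S ⊆ {1,…,N}`: rows are indexed by the
elements of `S`, and the row corresponding to `j ∈ S` is the standard basis row vector `eⱼᵀ`. -/
def samp {N : ℕ} (S : Finset (Fin N)) : Matrix {x // x ∈ S} (Fin N) ℝ :=
  fun i j => if (i : Fin N) = j then 1 else 0

/-- Squared Frobenius norm of a matrix. -/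
def frobSq {m n : Type*} [Fintype m] [Fintype n] (A : Matrix m n ℝ) : ℝ :=
  ∑ i, ∑ j, (A i j) ^ 2

/-- The least-squares reconstruction matrix `R_S = U (M_S U)†`. -/
def lsRec {N k : ℕ} (U : Matrix (Fin N) (Fin k) ℝ) (S : Finset (Fin N)) :
    Matrix (Fin N) {x // x ∈ S} ℝ :=
  U * pinv (samp S * U)

/-- `ξ₁(S) = ‖U − R_S M_S U‖_F²`, the noiseless reconstruction error. -/
def xi1 {N k : ℕ} (U : Matrix (Fin N) (Fin k) ℝ) (S : Finset (Fin N)) : ℝ :=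
  frobSq (U - lsRec U S * (samp S * U))

/-- `ξ₂(S) = ‖R_S‖_F²`, the noise-sensitivity term. -/
def xi2 {N k : ℕ} (U : Matrix (Fin N) (Fin k) ℝ) (S : Finset (Fin N)) : ℝ :=
  frobSq (lsRec U S)

/-!
Write `A = M_S U`, let `E` delete the row `v`, so that `M_{S∖{v}} U = E A`, and let `e` be the
coordinate vector of `v`, so that `Eᵀ E + e eᵀ = 1`. As `U` is an isometry,
`ξ₁(S) = ‖1 - A† A‖² = k - rank A` and `ξ₂(S) = ‖A†‖²`, so everything reduces to
`rank (E A) = rank A ↔ ‖A†‖ ≤ ‖(E A)†‖`. Both directions use that `A†` has the least Frobenius norm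
among the `X` with `A X A = A`. If the rank is unchanged, `(E A)† E` is such an `X` for `A`.
If the rank drops, some `y` in the kernel of `E A` has `A y ≠ 0`, which puts `e` in the range
of `A`; then `A† Eᵀ` is such an `X` for `E A`, and
`‖A† Eᵀ‖² = ‖A†‖² - ‖A† e‖² < ‖A†‖²`.
-/

section FrobeniusNorm

variable {l m n : Type*} [Fintype l] [Fintype m] [Fintype n]

theorem frobSq_eq_trace_mul_transpose (A : Matrix m n ℝ) : frobSq A = (A * Aᵀ).trace := by
  simp only [frobSq, trace, diag_apply, Matrix.mul_apply, transpose_apply, sq]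

theorem frobSq_eq_trace_transpose_mul (A : Matrix m n ℝ) : frobSq A = (Aᵀ * A).trace := by
  rw [frobSq_eq_trace_mul_transpose, trace_mul_comm]

theorem frobSq_transpose (A : Matrix m n ℝ) : frobSq Aᵀ = frobSq A := by
  rw [frobSq_eq_trace_mul_transpose, frobSq_eq_trace_transpose_mul, transpose_transpose]

theorem frobSq_nonneg (A : Matrix m n ℝ) : 0 ≤ frobSq A := by
  unfold frobSq
  positivity

theorem frobSq_mul_of_transpose_mul_self_eq_one [DecidableEq m] {U : Matrix l m ℝ}
    (hU : Uᵀ * U = 1) (X : Matrix m n ℝ) : frobSq (U * X) = frobSq X := by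
  rw [frobSq_eq_trace_transpose_mul, frobSq_eq_trace_transpose_mul, transpose_mul,
    Matrix.mul_assoc, ← Matrix.mul_assoc Uᵀ, hU, Matrix.one_mul]

theorem frobSq_mul_of_mul_transpose_self_eq_one [DecidableEq m] {E : Matrix m n ℝ}
    (hE : E * Eᵀ = 1) (X : Matrix l m ℝ) : frobSq (X * E) = frobSq X := by
  rw [← frobSq_transpose, transpose_mul,
    frobSq_mul_of_transpose_mul_self_eq_one (by rwa [transpose_transpose]), frobSq_transpose]

theorem frobSq_mul_transpose_add_dotProduct [DecidableEq m] {E : Matrix l m ℝ} {e : m → ℝ}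
    (hEe : Eᵀ * E + vecMulVec e e = 1) (X : Matrix n m ℝ) :
    frobSq (X * Eᵀ) + X *ᵥ e ⬝ᵥ X *ᵥ e = frobSq X := by
  rw [← trace_vecMulVec, frobSq_eq_trace_mul_transpose, ← trace_add, frobSq_eq_trace_mul_transpose]
  congr 1
  calc X * Eᵀ * (X * Eᵀ)ᵀ + vecMulVec (X *ᵥ e) (X *ᵥ e)
      = X * (Eᵀ * E + vecMulVec e e) * Xᵀ := by
        simp only [transpose_mul, transpose_transpose, Matrix.mul_add, Matrix.add_mul,
          mul_vecMulVec, vecMulVec_mul, vecMul_transpose, Matrix.mul_assoc]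
    _ = X * Xᵀ := by rw [hEe, Matrix.mul_one]

theorem isStarProjection_iff_transpose {P : Matrix m m ℝ} :
    IsStarProjection P ↔ P * P = P ∧ Pᵀ = P := by
  rw [isStarProjection_iff', star_eq_conjTranspose, conjTranspose_eq_transpose_of_trivial]

theorem frobSq_eq_trace_of_isStarProjection {P : Matrix m m ℝ} (hP : IsStarProjection P) :
    frobSq P = P.trace := by
  obtain ⟨hmul, htr⟩ := isStarProjection_iff_transpose.1 hP
  rw [frobSq_eq_trace_mul_transpose, htr, hmul]

theorem frobSq_mul_le_of_isStarProjection {P : Matrix m m ℝ} (hP : IsStarProjection P)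
    (X : Matrix m n ℝ) : frobSq (P * X) ≤ frobSq X := by
  classical
  have frobSq_mul {Q : Matrix m m ℝ} (hQ : IsStarProjection Q) :
      frobSq (Q * X) = (Xᵀ * Q * X).trace := by
    obtain ⟨hmul, htr⟩ := isStarProjection_iff_transpose.1 hQ
    rw [frobSq_eq_trace_transpose_mul, transpose_mul, htr, Matrix.mul_assoc, ← Matrix.mul_assoc Q,
      hmul, Matrix.mul_assoc]
  have pythagoras : frobSq (P * X) + frobSq ((1 - P) * X) = frobSq X := by
    rw [frobSq_mul hP, frobSq_mul hP.one_sub, frobSq_eq_trace_transpose_mul, ← trace_add,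
      ← Matrix.add_mul, ← Matrix.mul_add, add_sub_cancel, Matrix.mul_one]
  linarith [frobSq_nonneg ((1 - P) * X)]

theorem frobSq_mul_le_of_isStarProjection_right {P : Matrix n n ℝ} (hP : IsStarProjection P)
    (X : Matrix m n ℝ) : frobSq (X * P) ≤ frobSq X := by
  have h := frobSq_mul_le_of_isStarProjection hP Xᵀ
  rwa [← (isStarProjection_iff_transpose.1 hP).2, ← transpose_mul, frobSq_transpose,
    frobSq_transpose] at h

end FrobeniusNorm

section Rank

variable {K l m n p : Type*} [Field K] [Fintype n]

theorem trace_eq_rank_of_isIdempotentElem {P : Matrix n n K} (hP : IsIdempotentElem P) :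
    P.trace = P.rank := by
  classical
  have hlin : IsIdempotentElem (toLin' P) := hP.map (toLinAlgEquiv' (R := K))
  rw [← trace_toLin'_eq, (LinearMap.IsIdempotentElem.isProj_range _ hlin).trace]
  rfl

variable [Fintype m] {E : Matrix l m K} {e : m → K} {A : Matrix m n K}

theorem rank_mul_eq_right_iff :
    (E * A).rank = A.rank ↔ ∀ y, (E * A) *ᵥ y = 0 → A *ᵥ y = 0 := by
  have hle : LinearMap.ker A.mulVecLin ≤ LinearMap.ker (E * A).mulVecLin := by
    rw [mulVecLin_mul]
    exact LinearMap.ker_le_ker_comp _ _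
  have hA := A.mulVecLin.finrank_range_add_finrank_ker
  have hEA := (E * A).mulVecLin.finrank_range_add_finrank_ker
  calc (E * A).rank = A.rank
      ↔ Module.finrank K (LinearMap.ker (E * A).mulVecLin) =
          Module.finrank K (LinearMap.ker A.mulVecLin) := by
        rw [rank, rank]
        lia
    _ ↔ LinearMap.ker (E * A).mulVecLin ≤ LinearMap.ker A.mulVecLin :=
        ⟨fun h => (Submodule.eq_of_le_of_finrank_eq hle h.symm).ge,
          fun h => by rw [h.antisymm hle]⟩
    _ ↔ ∀ y, (E * A) *ᵥ y = 0 → A *ᵥ y = 0 := Iff.rfl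

theorem mul_eq_zero_of_rank_mul_eq (hrank : (E * A).rank = A.rank) {X : Matrix n p K}
    (hX : E * A * X = 0) : A * X = 0 := by
  ext i j
  have hcol : (E * A) *ᵥ X.col j = 0 := funext fun a => congrFun₂ hX a j
  exact congrFun (rank_mul_eq_right_iff.1 hrank _ hcol) i

variable [Fintype l] [DecidableEq m]

theorem exists_mulVec_eq_of_rank_mul_ne (hEe : Eᵀ * E + vecMulVec e e = 1)
    (hrank : (E * A).rank ≠ A.rank) : ∃ x, A *ᵥ x = e := by
  obtain ⟨y, hEAy, hAy⟩ : ∃ y, (E * A) *ᵥ y = 0 ∧ A *ᵥ y ≠ 0 := by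
    simpa only [ne_eq, rank_mul_eq_right_iff, not_forall, exists_prop] using hrank
  have hspan : A *ᵥ y = (e ⬝ᵥ A *ᵥ y) • e := by
    calc A *ᵥ y = (Eᵀ * E + vecMulVec e e) *ᵥ A *ᵥ y := by rw [hEe, one_mulVec]
      _ = Eᵀ *ᵥ (E * A) *ᵥ y + (e ⬝ᵥ A *ᵥ y) • e := by
        rw [add_mulVec, vecMulVec_mulVec, op_smul_eq_smul, ← mulVec_mulVec, ← mulVec_mulVec]
      _ = (e ⬝ᵥ A *ᵥ y) • e := by rw [hEAy, mulVec_zero, zero_add]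
  have hcoeff : e ⬝ᵥ A *ᵥ y ≠ 0 := fun h => hAy (by rw [hspan, h, zero_smul])
  exact ⟨(e ⬝ᵥ A *ᵥ y)⁻¹ • y, by rw [mulVec_smul, inv_smul_eq_iff₀ hcoeff, ← hspan]⟩

theorem ne_zero_of_rank_mul_ne (hEe : Eᵀ * E + vecMulVec e e = 1)
    (hrank : (E * A).rank ≠ A.rank) : e ≠ 0 := by
  rintro rfl
  rw [vecMulVec_zero, add_zero] at hEe
  refine hrank ((rank_mul_le_right E A).antisymm ?_)
  calc A.rank = (Eᵀ * (E * A)).rank := by rw [← Matrix.mul_assoc, hEe, Matrix.one_mul]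
    _ ≤ (E * A).rank := rank_mul_le_right _ _

theorem mulVec_eq_zero_of_transpose_mul_self_add_vecMulVec [DecidableEq l] (hE : E * Eᵀ = 1)
    (hEe : Eᵀ * E + vecMulVec e e = 1) : E *ᵥ e = 0 := by
  have hprod : vecMulVec (E *ᵥ e) e = 0 := by
    rw [← mul_vecMulVec, ← add_right_inj E]
    calc E + E * vecMulVec e e = E * (Eᵀ * E + vecMulVec e e) := by
          rw [Matrix.mul_add, ← Matrix.mul_assoc, hE, Matrix.one_mul]
      _ = E + 0 := by rw [hEe, Matrix.mul_one, add_zero]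
  by_contra hne
  obtain ⟨i, hi⟩ := Function.ne_iff.1 hne
  have he : e = 0 := funext fun j => (mul_eq_zero.1 (congrFun₂ hprod i j)).resolve_left hi
  exact hne (by rw [he, mulVec_zero])

end Rank

section Pseudoinverse

variable {l m n : Type*} [Fintype l] [Fintype m] [Fintype n]

theorem exists_commute_generalizedInverse {H : Matrix n n ℝ} (hH : Hᵀ = H) :
    ∃ G : Matrix n n ℝ, Gᵀ = G ∧ Commute G H ∧ H * G * H = H ∧ G * H * G = G := by
  classical
  have hsa : IsSelfAdjoint H := by
    rwa [IsSelfAdjoint, star_eq_conjTranspose, conjTranspose_eq_transpose_of_trivial]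
  have hmul (f g : ℝ → ℝ) : cfc f H * cfc g H = cfc (fun x => f x * g x) H :=
    (cfc_mul f g H (H.finite_real_spectrum.continuousOn f)
      (H.finite_real_spectrum.continuousOn g)).symm
  have hid : cfc (fun x : ℝ => x) H = H := cfc_id' ℝ H
  refine ⟨cfc (fun x : ℝ => x⁻¹) H, ?_, ?_, ?_, ?_⟩
  · rw [← conjTranspose_eq_transpose_of_trivial]
    exact cfc_predicate (fun x : ℝ => x⁻¹) H
  · simpa only [hid] using cfc_commute_cfc (fun x : ℝ => x⁻¹) (fun x => x) H
  · have h : cfc (fun x : ℝ => x) H * cfc (fun x : ℝ => x⁻¹) H * cfc (fun x : ℝ => x) H =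
        cfc (fun x : ℝ => x) H := by
      simp only [hmul, mul_inv_mul_cancel]
    rwa [hid] at h
  · have h : cfc (fun x : ℝ => x⁻¹) H * cfc (fun x : ℝ => x) H * cfc (fun x : ℝ => x⁻¹) H =
        cfc (fun x : ℝ => x⁻¹) H := by
      have inv_mul_mul_inv (x : ℝ) : x⁻¹ * x * x⁻¹ = x⁻¹ := by
        simpa only [inv_inv] using mul_inv_mul_cancel x⁻¹
      simp only [hmul, inv_mul_mul_inv]
    rwa [hid] at h

theorem exists_penrose (A : Matrix m n ℝ) : ∃ B : Matrix n m ℝ,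
    A * B * A = A ∧ B * A * B = B ∧ (A * B)ᵀ = A * B ∧ (B * A)ᵀ = B * A := by
  classical
  obtain ⟨G, hGt, hcomm, hHGH, hGHG⟩ :=
    exists_commute_generalizedInverse (H := Aᵀ * A) (by rw [transpose_mul, transpose_transpose])
  refine ⟨G * Aᵀ, ?_, ?_, ?_, ?_⟩
  · have hker : Aᵀ * A * (G * (Aᵀ * A) - 1) = 0 := by
      rw [Matrix.mul_sub, ← Matrix.mul_assoc, hHGH, Matrix.mul_one, sub_self]
    have hA : A * (G * (Aᵀ * A) - 1) = 0 :=
      mul_eq_zero_of_rank_mul_eq (rank_transpose_mul_self A) hker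
    rw [Matrix.mul_sub, Matrix.mul_one, sub_eq_zero] at hA
    simpa only [Matrix.mul_assoc] using hA
  · simpa only [Matrix.mul_assoc] using congrArg (· * Aᵀ) hGHG
  · simp only [transpose_mul, transpose_transpose, hGt, Matrix.mul_assoc]
  · rw [Matrix.mul_assoc, transpose_mul, hGt, transpose_mul, transpose_transpose]
    exact hcomm.eq.symm

variable [DecidableEq m] [DecidableEq n]

theorem pinv_spec (A : Matrix m n ℝ) :
    A * pinv A * A = A ∧ pinv A * A * pinv A = pinv A ∧
      (A * pinv A)ᵀ = A * pinv A ∧ (pinv A * A)ᵀ = pinv A * A := by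
  rw [pinv, dif_pos (exists_penrose A)]
  exact (exists_penrose A).choose_spec

theorem mul_pinv_mul_self (A : Matrix m n ℝ) : A * pinv A * A = A :=
  (pinv_spec A).1

theorem pinv_mul_self_mul_pinv (A : Matrix m n ℝ) : pinv A * A * pinv A = pinv A :=
  (pinv_spec A).2.1

theorem isStarProjection_mul_pinv (A : Matrix m n ℝ) : IsStarProjection (A * pinv A) :=
  isStarProjection_iff_transpose.2
    ⟨by rw [← Matrix.mul_assoc, mul_pinv_mul_self], (pinv_spec A).2.2.1⟩

theorem isStarProjection_pinv_mul (A : Matrix m n ℝ) : IsStarProjection (pinv A * A) :=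
  isStarProjection_iff_transpose.2
    ⟨by rw [← Matrix.mul_assoc, pinv_mul_self_mul_pinv], (pinv_spec A).2.2.2⟩

theorem rank_pinv_mul_self (A : Matrix m n ℝ) : (pinv A * A).rank = A.rank := by
  refine (rank_mul_le_right _ _).antisymm ?_
  calc A.rank = (A * (pinv A * A)).rank := by rw [← Matrix.mul_assoc, mul_pinv_mul_self]
    _ ≤ (pinv A * A).rank := rank_mul_le_right _ _

theorem frobSq_one_sub_pinv_mul_self (A : Matrix m n ℝ) :
    frobSq (1 - pinv A * A) = Fintype.card n - A.rank := by
  have hP := isStarProjection_pinv_mul A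
  rw [frobSq_eq_trace_of_isStarProjection hP.one_sub, trace_sub, trace_one,
    trace_eq_rank_of_isIdempotentElem hP.isIdempotentElem, rank_pinv_mul_self]

theorem frobSq_pinv_le {A : Matrix m n ℝ} {X : Matrix n m ℝ} (hX : A * X * A = A) :
    frobSq (pinv A) ≤ frobSq X := by
  have hpinv : pinv A = pinv A * A * (X * (A * pinv A)) := by
    calc pinv A = pinv A * (A * X * A) * pinv A := by rw [hX, pinv_mul_self_mul_pinv]
      _ = pinv A * A * (X * (A * pinv A)) := by simp only [Matrix.mul_assoc]
  calc frobSq (pinv A) = frobSq (pinv A * A * (X * (A * pinv A))) := congrArg frobSq hpinv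
    _ ≤ frobSq (X * (A * pinv A)) :=
        frobSq_mul_le_of_isStarProjection (isStarProjection_pinv_mul A) _
    _ ≤ frobSq X := frobSq_mul_le_of_isStarProjection_right (isStarProjection_mul_pinv A) X

variable [DecidableEq l] {E : Matrix l m ℝ} {e : m → ℝ} {A : Matrix m n ℝ}

theorem frobSq_pinv_le_of_rank_mul_eq (hE : E * Eᵀ = 1) (hrank : (E * A).rank = A.rank) :
    frobSq (pinv A) ≤ frobSq (pinv (E * A)) := by
  set B := E * A with hB
  have hker : B * (1 - pinv B * B) = 0 := by
    rw [Matrix.mul_sub, Matrix.mul_one, ← Matrix.mul_assoc, mul_pinv_mul_self, sub_self]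
  have hA : A * (1 - pinv B * B) = 0 := mul_eq_zero_of_rank_mul_eq hrank hker
  rw [Matrix.mul_sub, Matrix.mul_one, sub_eq_zero] at hA
  calc frobSq (pinv A) ≤ frobSq (pinv B * E) :=
        frobSq_pinv_le (by rw [Matrix.mul_assoc, Matrix.mul_assoc, ← hB, ← hA])
    _ = frobSq (pinv B) := frobSq_mul_of_mul_transpose_self_eq_one hE _

theorem mul_pinv_mul_transpose_mul_cancel (hE : E * Eᵀ = 1)
    (hEe : Eᵀ * E + vecMulVec e e = 1) (he : A *ᵥ pinv A *ᵥ e = e) :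
    E * A * (pinv A * Eᵀ) * (E * A) = E * A := by
  have hEE : Eᵀ * E = 1 - vecMulVec e e := eq_sub_of_add_eq hEe
  have hzero : E * A * pinv A * vecMulVec e e = 0 := by
    rw [mul_vecMulVec, ← mulVec_mulVec, ← mulVec_mulVec, he,
      mulVec_eq_zero_of_transpose_mul_self_add_vecMulVec hE hEe, zero_vecMulVec]
  calc E * A * (pinv A * Eᵀ) * (E * A) = E * A * pinv A * (Eᵀ * E) * A := by
        simp only [Matrix.mul_assoc]
    _ = E * (A * pinv A * A) := by
        rw [hEE, Matrix.mul_sub, hzero, Matrix.mul_one, sub_zero]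
        simp only [Matrix.mul_assoc]
    _ = E * A := by rw [mul_pinv_mul_self]

theorem frobSq_pinv_mul_lt_of_rank_mul_ne (hE : E * Eᵀ = 1) (hEe : Eᵀ * E + vecMulVec e e = 1)
    (hrank : (E * A).rank ≠ A.rank) : frobSq (pinv (E * A)) < frobSq (pinv A) := by
  have hrange : A *ᵥ pinv A *ᵥ e = e := by
    obtain ⟨x, rfl⟩ := exists_mulVec_eq_of_rank_mul_ne hEe hrank
    rw [mulVec_mulVec, mulVec_mulVec, mul_pinv_mul_self]
  have hne : pinv A *ᵥ e ≠ 0 := fun h =>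
    ne_zero_of_rank_mul_ne hEe hrank (by rw [← hrange, h, mulVec_zero])
  calc frobSq (pinv (E * A)) ≤ frobSq (pinv A * Eᵀ) :=
        frobSq_pinv_le (mul_pinv_mul_transpose_mul_cancel hE hEe hrange)
    _ < frobSq (pinv A * Eᵀ) + pinv A *ᵥ e ⬝ᵥ pinv A *ᵥ e :=
        lt_add_of_pos_right _ (dotProduct_star_self_pos_iff.2 hne)
    _ = frobSq (pinv A) := frobSq_mul_transpose_add_dotProduct hEe _

theorem rank_mul_eq_iff_frobSq_pinv_le (hE : E * Eᵀ = 1) (hEe : Eᵀ * E + vecMulVec e e = 1) :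
    (E * A).rank = A.rank ↔ frobSq (pinv A) ≤ frobSq (pinv (E * A)) :=
  ⟨frobSq_pinv_le_of_rank_mul_eq hE, fun hle => by_contra fun hrank =>
    (frobSq_pinv_mul_lt_of_rank_mul_ne hE hEe hrank).not_ge hle⟩

end Pseudoinverse

section Sampling

variable {N k : ℕ} {S T : Finset (Fin N)} {v : Fin N}

theorem samp_mul_apply {n : Type*} (S : Finset (Fin N)) (X : Matrix (Fin N) n ℝ) (i : S) (j : n) :
    (samp S * X) i j = X i j := by
  simp only [samp, Matrix.mul_apply, ite_mul, one_mul, zero_mul, Finset.sum_ite_eq,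
    Finset.mem_univ, if_true]

theorem samp_mul_transpose_samp (S : Finset (Fin N)) : samp S * (samp S)ᵀ = 1 := by
  ext i j
  simp only [samp_mul_apply, transpose_apply, samp, Matrix.one_apply, Subtype.ext_iff, eq_comm]

theorem transpose_samp_mul_samp (S : Finset (Fin N)) :
    (samp S)ᵀ * samp S = diagonal fun i => if i ∈ S then 1 else 0 := by
  ext i j
  calc ((samp S)ᵀ * samp S) i j
      = ∑ x : S, if (x : Fin N) = i then (if i = j then 1 else 0) else 0 := by
        simp +contextual only [Matrix.mul_apply, transpose_apply, samp, ite_mul, one_mul, zero_mul]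
    _ = ∑ x ∈ S, if x = i then (if i = j then 1 else 0) else 0 :=
        Finset.sum_coe_sort S fun x => if x = i then (if i = j then 1 else 0) else 0
    _ = diagonal (fun i => if i ∈ S then 1 else 0) i j := by
        rw [Finset.sum_ite_eq', diagonal_apply]
        grind

theorem transpose_samp_erase_mul_samp_erase (hv : v ∈ S) :
    (samp (S.erase v))ᵀ * samp (S.erase v) + vecMulVec (Pi.single v 1) (Pi.single v 1) =
      (samp S)ᵀ * samp S := by
  rw [transpose_samp_mul_samp, transpose_samp_mul_samp]
  ext i j
  simp only [Matrix.add_apply, diagonal_apply, vecMulVec_apply, Pi.single_apply, Finset.mem_erase]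
  grind

/-- The matrix that selects, among the samples taken on `S`, those taken on `T`; it is meant for
`T ⊆ S`, and for `T = S.erase v` it deletes the row `v`. -/
def subsamp (S T : Finset (Fin N)) : Matrix T S ℝ :=
  samp T * (samp S)ᵀ

theorem subsamp_mul_samp (hTS : T ⊆ S) : subsamp S T * samp S = samp T := by
  ext i j
  rw [subsamp, Matrix.mul_assoc, samp_mul_apply, transpose_samp_mul_samp, diagonal_apply, samp,
    if_pos (hTS i.2)]

theorem subsamp_mul_transpose_subsamp (hTS : T ⊆ S) : subsamp S T * (subsamp S T)ᵀ = 1 := by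
  calc subsamp S T * (subsamp S T)ᵀ = subsamp S T * samp S * (samp T)ᵀ := by
        rw [subsamp, transpose_mul, transpose_transpose, ← Matrix.mul_assoc]
    _ = 1 := by rw [subsamp_mul_samp hTS, samp_mul_transpose_samp]

theorem transpose_subsamp_erase_mul_subsamp_erase (hv : v ∈ S) :
    (subsamp S (S.erase v))ᵀ * subsamp S (S.erase v) +
      vecMulVec (samp S *ᵥ Pi.single v 1) (samp S *ᵥ Pi.single v 1) = 1 := by
  calc (subsamp S (S.erase v))ᵀ * subsamp S (S.erase v) +
        vecMulVec (samp S *ᵥ Pi.single v 1) (samp S *ᵥ Pi.single v 1)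
      = samp S * ((samp (S.erase v))ᵀ * samp (S.erase v) +
          vecMulVec (Pi.single v 1) (Pi.single v 1)) * (samp S)ᵀ := by
        simp only [subsamp, transpose_mul, transpose_transpose, Matrix.mul_add, Matrix.add_mul,
          mul_vecMulVec, vecMulVec_mul, vecMul_transpose, Matrix.mul_assoc]
    _ = samp S * (samp S)ᵀ * (samp S * (samp S)ᵀ) := by
        rw [transpose_samp_erase_mul_samp_erase hv]
        simp only [Matrix.mul_assoc]
    _ = 1 := by rw [samp_mul_transpose_samp, Matrix.mul_one]

theorem rank_samp_erase_mul_eq_iff {n : Type*} [Fintype n] [DecidableEq n]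
    (X : Matrix (Fin N) n ℝ) (hv : v ∈ S) :
    (samp (S.erase v) * X).rank = (samp S * X).rank ↔
      frobSq (pinv (samp S * X)) ≤ frobSq (pinv (samp (S.erase v) * X)) := by
  have hsub := S.erase_subset v
  rw [← subsamp_mul_samp hsub, Matrix.mul_assoc]
  exact rank_mul_eq_iff_frobSq_pinv_le (subsamp_mul_transpose_subsamp hsub)
    (transpose_subsamp_erase_mul_subsamp_erase hv)

theorem xi1_eq_sub_rank {U : Matrix (Fin N) (Fin k) ℝ} (hU : Uᵀ * U = 1) (S : Finset (Fin N)) :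
    xi1 U S = k - (samp S * U).rank := by
  rw [xi1, lsRec, Matrix.mul_assoc]
  nth_rw 1 [← Matrix.mul_one U]
  rw [← Matrix.mul_sub, frobSq_mul_of_transpose_mul_self_eq_one hU, frobSq_one_sub_pinv_mul_self,
    Fintype.card_fin]

theorem xi2_eq_frobSq_pinv {U : Matrix (Fin N) (Fin k) ℝ} (hU : Uᵀ * U = 1)
    (S : Finset (Fin N)) : xi2 U S = frobSq (pinv (samp S * U)) :=
  frobSq_mul_of_transpose_mul_self_eq_one hU _

end Sampling

/-- for `|S| ≥ 2` and `v ∈ S`, `Δ₁(S,v) = 0 ↔ Δ₂(S,v) ≤ 0`;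
equivalently, removing `v` leaves `rank(M_S U)` unchanged iff `ξ₂(S∖{v}) ≥ ξ₂(S)`. -/
theorem stmt8 (N k : ℕ) (hN : 0 < N) (hk : 0 < k) (hkN : k ≤ N)
    (U : Matrix (Fin N) (Fin k) ℝ) (hU : Uᵀ * U = 1)
    (S : Finset (Fin N)) (hS : 2 ≤ S.card) (v : Fin N) (hv : v ∈ S) :
    (xi1 U S - xi1 U (S.erase v) = 0 ↔ xi2 U S - xi2 U (S.erase v) ≤ 0) ∧
    ((samp (S.erase v) * U).rank = (samp S * U).rank ↔ xi2 U S ≤ xi2 U (S.erase v)) := by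
  have hrank : (samp (S.erase v) * U).rank = (samp S * U).rank ↔ xi2 U S ≤ xi2 U (S.erase v) := by
    rw [xi2_eq_frobSq_pinv hU, xi2_eq_frobSq_pinv hU]
    exact rank_samp_erase_mul_eq_iff U hv
  refine ⟨?_, hrank⟩
  rw [xi1_eq_sub_rank hU, xi1_eq_sub_rank hU, sub_sub_sub_cancel_left, sub_eq_zero, Nat.cast_inj,
    sub_nonpos, hrank]
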